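/- arXiv:2002.01178 — 2 statements merged into one kernel-verified Lean document; each statement's English description precedes it below -/
import Mathlib

section
/- Let x and y be binary strings with m' := |x̃| ≥ n' := |ỹ|, let a := |x^{(1)}| and b := |y^{(1)}|, and suppose x[1] ≠ y[1]. Then: if m' = n' = 1, then dtw(x,y)² = max(|x|, |y|); if m' > n' = 1, then dtw(x,y)² = a + dtw(x[a+1, |x|], y)²; and if n' > 1, then dtw(x,y)² = min( a + dtw(x[a+1, |x|], y)², b + dtw(x, y[b+1, |y|])² ). -/
/-- One step of a warping path: move down, right, or diagonally. -/
def wpStep (a b : ℕ × ℕ) : Prop :=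
  (b.1 = a.1 + 1 ∧ b.2 = a.2) ∨ (b.1 = a.1 ∧ b.2 = a.2 + 1) ∨
    (b.1 = a.1 + 1 ∧ b.2 = a.2 + 1)

/-- A warping path of order `m × n` (0-based indices). -/
def IsWarpingPath (m n : ℕ) (p : List (ℕ × ℕ)) : Prop :=
  p.head? = some (0, 0) ∧ p.getLast? = some (m - 1, n - 1) ∧
    List.Chain' wpStep p ∧ ∀ q ∈ p, q.1 < m ∧ q.2 < n

/-- The cost of aligning binary strings `x` and `y` along path `p`:
the number of aligned mismatching pairs (for binary symbols,
`(x[i] - y[j])^2` is `0` if the symbols agree and `1` otherwise). -/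
def pathCost (x y : List Bool) (p : List (ℕ × ℕ)) : ℕ :=
  (p.map fun q => if x.getD q.1 false = y.getD q.2 false then 0 else 1).sum

/-- The squared dynamic time warping distance `dtw(x,y)²` of two binary strings. -/
noncomputable def dtwSq (x y : List Bool) : ℕ :=
  sInf {c | ∃ p, IsWarpingPath x.length y.length p ∧ pathCost x y p = c}

/-- The dynamic time warping distance `dtw(x,y)`. -/
noncomputable def dtw (x y : List Bool) : ℝ :=
  Real.sqrt (dtwSq x y)

/-- The condensation of a binary string: collapse every maximal run of equal
consecutive symbols to a single symbol. -/
def condense : List Bool → List Bool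
  | [] => []
  | [a] => [a]
  | a :: b :: rest => if a = b then condense (b :: rest) else a :: condense (b :: rest)

/-- Auxiliary function collecting the block sizes of a binary string. -/
def blockSizesAux : Bool → ℕ → List Bool → List ℕ
  | _, cnt, [] => [cnt]
  | cur, cnt, a :: rest =>
      if a = cur then blockSizesAux cur (cnt + 1) rest
      else cnt :: blockSizesAux a 1 rest

/-- The list of block sizes of a binary string (sizes of the maximal runs
of equal consecutive symbols, from left to right). -/
def blockSizes : List Bool → List ℕ
  | [] => []
  | a :: rest => blockSizesAux a 1 rest

/-- The objective `F(z) = Σᵢ dtw(sᵢ, z)²`. -/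
noncomputable def Fobj (ss : List (List Bool)) (z : List Bool) : ℕ :=
  (ss.map fun s => dtwSq s z).sum

/-- `z` is a mean of the strings `ss`: a nonempty binary string minimizing
`F` among all nonempty binary strings. -/
def IsMean (ss : List (List Bool)) (z : List Bool) : Prop :=
  z ≠ [] ∧ ∀ w : List Bool, w ≠ [] → Fobj ss z ≤ Fobj ss w

/-- The optimal value of a Min 1-Separated Sum instance with integers `b`
(1-based indexing) and selection size `r`: minimize the sum of `r` selected
integers, no two of which are consecutive. -/
noncomputable def mssValue (b : List ℕ) (r : ℕ) : ℕ :=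
  sInf {s | ∃ I : List ℕ, I.length = r ∧ (∀ i ∈ I, 1 ≤ i ∧ i ≤ b.length) ∧
    List.Chain' (fun a c => a + 2 ≤ c) I ∧
    (I.map fun i => b.getD (i - 1) 0).sum = s}


abbrev dd (a b : Bool) : ℕ := if a = b then 0 else 1

inductive WW : List Bool → List Bool → ℕ → Prop
  | base (a b : Bool) : WW [a] [b] (dd a b)
  | down (a b : Bool) (xs ys : List Bool) (c : ℕ) : WW xs (b :: ys) c → WW (a :: xs) (b :: ys) (dd a b + c)
  | right (a b : Bool) (xs ys : List Bool) (c : ℕ) : WW (a :: xs) ys c → WW (a :: xs) (b :: ys) (dd a b + c)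
  | diag (a b : Bool) (xs ys : List Bool) (c : ℕ) : WW xs ys c → WW (a :: xs) (b :: ys) (dd a b + c)

theorem WW.symm {x y : List Bool} {c : ℕ} (h : WW x y c) : WW y x c := by
  have e : ∀ a b, dd a b = dd b a := by decide
  induction h with
  | base a b => rw [e]; exact .base _ _
  | down a b xs ys c _ ih => rw [e]; exact .right _ _ _ _ _ ih
  | right a b xs ys c _ ih => rw [e]; exact .down _ _ _ _ _ ih
  | diag a b xs ys c _ ih => rw [e]; exact .diag _ _ _ _ _ ih

theorem WW.ne {x y : List Bool} {c : ℕ} (h : WW x y c) : x ≠ [] ∧ y ≠ [] := by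
  cases h <;> simp

theorem WW.exists_right (b : Bool) (ys : List Bool) (a : Bool) : ∃ c, WW [a] (b :: ys) c := by
  induction ys generalizing b with
  | nil => exact ⟨_, .base _ _⟩
  | cons d ys ih => obtain ⟨c, h⟩ := ih d; exact ⟨_, .right _ _ _ _ _ h⟩

theorem WW.exists_all (a b : Bool) (xs ys : List Bool) : ∃ c, WW (a :: xs) (b :: ys) c := by
  induction xs generalizing a with
  | nil => exact WW.exists_right _ _ _
  | cons d xs ih => obtain ⟨c, h⟩ := ih d; exact ⟨_, .down _ _ _ _ _ h⟩

theorem pathCost_shift (x y : List Bool) (k l : ℕ) (p : List (ℕ × ℕ)) :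
    pathCost x y (p.map fun q => (q.1 + k, q.2 + l)) = pathCost (x.drop k) (y.drop l) p := by
  simp only [pathCost, List.map_map]
  congr 1
  apply List.map_congr_left
  intro q _
  simp [List.getD_eq_getElem?_getD, List.getElem?_drop, Nat.add_comm]

theorem path_ext (k l m n : ℕ) (p : List (ℕ × ℕ)) (hs : wpStep (0, 0) (k, l))
    (hm : 0 < m) (hn : 0 < n) (h : IsWarpingPath m n p) :
    IsWarpingPath (m + k) (n + l) ((0, 0) :: p.map fun q => (q.1 + k, q.2 + l)) := by
  obtain ⟨h1, h2, h3, h4⟩ := h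
  refine ⟨rfl, ?_, ?_, ?_⟩
  · rw [List.getLast?_cons, List.getLast?_map, h2]
    simp
    omega
  · cases p with
    | nil => simp at h1
    | cons q p =>
      simp only [List.head?_cons, Option.some.injEq] at h1
      subst h1
      rw [List.map_cons]
      refine List.isChain_cons_cons.2 ⟨by simpa using hs, ?_⟩
      rw [← List.map_cons (f := fun q : ℕ × ℕ => (q.1 + k, q.2 + l)), List.isChain_map]
      refine List.IsChain.imp ?_ h3
      intro a b hab
      simp only [wpStep] at hab ⊢
      omega
  · intro q hq
    rcases List.mem_cons.1 hq with rfl | hq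
    · simp; omega
    · obtain ⟨r, hr, rfl⟩ := List.mem_map.1 hq
      have := h4 r hr
      simp only; omega

theorem WW.path {x y : List Bool} {c : ℕ} (h : WW x y c) :
    ∃ p, IsWarpingPath x.length y.length p ∧ pathCost x y p = c := by
  induction h with
  | base a b => exact ⟨[(0, 0)], ⟨rfl, rfl, List.isChain_singleton _, by simp⟩, by simp [pathCost, dd]⟩
  | down a b xs ys c hw ih =>
    obtain ⟨p, hp, hc⟩ := ih
    have hne := hw.ne
    refine ⟨_, path_ext 1 0 _ _ p (by simp [wpStep]) (List.length_pos_iff.2 hne.1) (List.length_pos_iff.2 hne.2) hp, ?_⟩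
    have := pathCost_shift (a :: xs) (b :: ys) 1 0 p
    simp only [List.drop_succ_cons, List.drop_zero] at this
    rw [← hc, ← this]; simp [pathCost, dd]
  | right a b xs ys c hw ih =>
    obtain ⟨p, hp, hc⟩ := ih
    have hne := hw.ne
    refine ⟨_, path_ext 0 1 _ _ p (by simp [wpStep]) (List.length_pos_iff.2 hne.1) (List.length_pos_iff.2 hne.2) hp, ?_⟩
    have := pathCost_shift (a :: xs) (b :: ys) 0 1 p
    simp only [List.drop_succ_cons, List.drop_zero] at this
    rw [← hc, ← this]; simp [pathCost, dd]
  | diag a b xs ys c hw ih =>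
    obtain ⟨p, hp, hc⟩ := ih
    have hne := hw.ne
    refine ⟨_, path_ext 1 1 _ _ p (by simp [wpStep]) (List.length_pos_iff.2 hne.1) (List.length_pos_iff.2 hne.2) hp, ?_⟩
    have := pathCost_shift (a :: xs) (b :: ys) 1 1 p
    simp only [List.drop_succ_cons, List.drop_zero] at this
    rw [← hc, ← this]; simp [pathCost, dd]

theorem WW.of_path (x y : List Bool) (p : List (ℕ × ℕ)) : ∀ (i j : ℕ),
    List.IsChain wpStep ((i, j) :: p) →
    ((i, j) :: p).getLast? = some (x.length - 1, y.length - 1) →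
    (∀ q ∈ ((i, j) :: p), q.1 < x.length ∧ q.2 < y.length) →
    WW (x.drop i) (y.drop j) (pathCost x y ((i, j) :: p)) := by
  induction p with
  | nil =>
    intro i j _ hl hb
    have h := hb (i, j) (by simp)
    simp only [List.getLast?_singleton, Option.some.injEq, Prod.mk.injEq] at hl
    obtain ⟨h1, h2⟩ := h
    simp only at h1 h2
    rw [List.drop_eq_getElem_cons h1, List.drop_eq_getElem_cons h2,
      List.drop_eq_nil_of_le (by omega), List.drop_eq_nil_of_le (by omega)]
    have := WW.base x[i] y[j]
    simpa [pathCost, dd, List.getD_eq_getElem?_getD, h1, h2] using this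
  | cons q p ih =>
    intro i j hc hl hb
    obtain ⟨k, l⟩ := q
    obtain ⟨hs, hc⟩ := List.isChain_cons_cons.1 hc
    have h := hb (i, j) (by simp)
    have hw := ih k l hc (by simpa [List.getLast?_cons_cons] using hl)
      (fun q hq => hb q (List.mem_cons_of_mem _ hq))
    obtain ⟨h1, h2⟩ := h
    simp only at h1 h2
    have e : pathCost x y ((i, j) :: (k, l) :: p) = dd x[i] y[j] + pathCost x y ((k, l) :: p) := by
      simp [pathCost, dd, List.getD_eq_getElem?_getD, h1, h2]
    rw [e]
    simp only [wpStep] at hs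
    rcases hs with ⟨rfl, rfl⟩ | ⟨rfl, rfl⟩ | ⟨rfl, rfl⟩
    · rw [List.drop_eq_getElem_cons h1]
      rw [List.drop_eq_getElem_cons h2] at hw ⊢
      exact .down _ _ _ _ _ hw
    · rw [List.drop_eq_getElem_cons h2]
      rw [List.drop_eq_getElem_cons h1] at hw ⊢
      exact .right _ _ _ _ _ hw
    · rw [List.drop_eq_getElem_cons h2, List.drop_eq_getElem_cons h1]
      exact .diag _ _ _ _ _ hw

theorem dtwSq_eq (x y : List Bool) : dtwSq x y = sInf {c | WW x y c} := by
  unfold dtwSq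
  congr 1
  ext c
  constructor
  · rintro ⟨p, ⟨h1, h2, h3, h4⟩, rfl⟩
    cases p with
    | nil => simp at h1
    | cons q p =>
      simp only [List.head?_cons, Option.some.injEq] at h1
      subst h1
      simpa using WW.of_path x y p 0 0 h3 h2 h4
  · exact fun h => h.path

theorem dtw_le {x y : List Bool} {c : ℕ} (h : WW x y c) : dtwSq x y ≤ c := by
  rw [dtwSq_eq]; exact Nat.sInf_le h

theorem dtw_mem {x y : List Bool} (hx : x ≠ []) (hy : y ≠ []) : WW x y (dtwSq x y) := by
  rw [dtwSq_eq]
  apply Nat.sInf_mem (s := {c | WW x y c})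
  cases x with
  | nil => exact absurd rfl hx
  | cons a xs => cases y with
    | nil => exact absurd rfl hy
    | cons b ys => exact WW.exists_all a b xs ys

theorem WW.up {u v : Bool} (h : u ≠ v) (a : ℕ) {x' y : List Bool} {c : ℕ}
    (hw : WW x' (v :: y) c) : WW (List.replicate a u ++ x') (v :: y) (a + c) := by
  induction a with
  | zero => simpa using hw
  | succ a ih =>
    have := WW.down u v _ _ _ ih
    rw [dd, if_neg h] at this
    have e : a + 1 + c = 1 + (a + c) := by omega
    rw [e]; exact this

theorem WW.const {u v : Bool} (h : u ≠ v) (a b : ℕ) :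
    WW (List.replicate (a+1) u) (List.replicate (b+1) v) (max (a+1) (b+1)) := by
  have hb := WW.base u v
  rw [dd, if_neg h] at hb
  induction a generalizing b with
  | zero =>
    induction b with
    | zero => simpa using hb
    | succ b ih =>
      have := WW.right u v _ _ _ ih
      rw [dd, if_neg h] at this
      have e : max (0 + 1) (b + 1 + 1) = 1 + max (0 + 1) (b + 1) := by omega
      rw [e]; exact this
  | succ a ih =>
    cases b with
    | zero =>
      have := WW.down u v _ _ _ (ih 0)
      rw [dd, if_neg h] at this
      have e : max (a + 1 + 1) (0 + 1) = 1 + max (a + 1) (0 + 1) := by omega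
      rw [e]; exact this
    | succ b =>
      have := WW.diag u v _ _ _ (ih b)
      rw [dd, if_neg h] at this
      have e : max (a + 1 + 1) (b + 1 + 1) = 1 + max (a + 1) (b + 1) := by omega
      rw [e]; exact this

/-- The string `x'` is empty or starts with `v`. -/
def St (v : Bool) (x' : List Bool) : Prop := x' = [] ∨ ∃ t, x' = v :: t

theorem WW.prep {v : Bool} {x' y : List Bool} {c : ℕ} (hs : St v x') (hw : WW x' y c) :
    WW x' (v :: y) c := by
  rcases hs with rfl | ⟨t, rfl⟩
  · exact absurd rfl hw.ne.1
  · simpa [dd] using WW.right v v t y c hw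

theorem WW.low {x y : List Bool} {c : ℕ} (h : WW x y c) : ∀ (u v : Bool), u ≠ v →
    ∀ (a b : ℕ) (x' y' : List Bool), St v x' → St u y' →
    x = List.replicate (a+1) u ++ x' → y = List.replicate (b+1) v ++ y' →
    (x' = [] ∧ y' = [] ∧ max (a+1) (b+1) ≤ c) ∨
    (x' ≠ [] ∧ ∃ c', WW x' y c' ∧ a + 1 + c' ≤ c) ∨
    (y' ≠ [] ∧ ∃ c', WW x y' c' ∧ b + 1 + c' ≤ c) := by
  induction h with
  | base p q =>
    intro u v huv a b x' y' hx hy ex ey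
    simp only [List.replicate_succ, List.cons_append, List.cons.injEq] at ex ey
    obtain ⟨rfl, ex⟩ := ex
    obtain ⟨rfl, ey⟩ := ey
    rw [eq_comm, List.append_eq_nil_iff, List.replicate_eq_nil_iff] at ex ey
    left
    refine ⟨ex.2, ey.2, ?_⟩
    simp [dd, huv, ex.1, ey.1]
  | down p q xs ys c hw ih =>
    intro u v huv a b x' y' hx hy ex ey
    simp only [List.replicate_succ, List.cons_append, List.cons.injEq] at ex
    obtain ⟨rfl, rfl⟩ := ex
    have hq : q = v := by
      simp only [List.replicate_succ, List.cons_append, List.cons.injEq] at ey; exact ey.1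
    subst hq
    rw [dd, if_neg huv]
    cases a with
    | zero =>
      right; left
      simp only [List.replicate_zero, List.nil_append] at hw
      exact ⟨hw.ne.1, c, hw, by omega⟩
    | succ a =>
      rcases ih p q huv a b x' y' hx hy rfl ey with ⟨h1, h2, h3⟩ | ⟨h1, c', h2, h3⟩ | ⟨h1, c', h2, h3⟩
      · left; exact ⟨h1, h2, by omega⟩
      · right; left; exact ⟨h1, c', h2, by omega⟩
      · right; right; exact ⟨h1, c', (h2.symm.prep hy).symm, by omega⟩
  | right p q xs ys c hw ih =>
    intro u v huv a b x' y' hx hy ex ey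
    simp only [List.replicate_succ, List.cons_append, List.cons.injEq] at ey
    obtain ⟨rfl, rfl⟩ := ey
    have hq : p = u := by
      simp only [List.replicate_succ, List.cons_append, List.cons.injEq] at ex; exact ex.1
    subst hq
    rw [dd, if_neg huv]
    cases b with
    | zero =>
      right; right
      simp only [List.replicate_zero, List.nil_append] at hw
      exact ⟨hw.ne.2, c, hw, by omega⟩
    | succ b =>
      rcases ih p q huv a b x' y' hx hy ex rfl with ⟨h1, h2, h3⟩ | ⟨h1, c', h2, h3⟩ | ⟨h1, c', h2, h3⟩
      · left; exact ⟨h1, h2, by omega⟩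
      · right; left; exact ⟨h1, c', h2.prep hx, by omega⟩
      · right; right; exact ⟨h1, c', h2, by omega⟩
  | diag p q xs ys c hw ih =>
    intro u v huv a b x' y' hx hy ex ey
    simp only [List.replicate_succ, List.cons_append, List.cons.injEq] at ex ey
    obtain ⟨rfl, rfl⟩ := ex
    obtain ⟨rfl, rfl⟩ := ey
    rw [dd, if_neg huv]
    cases a with
    | zero =>
      right; left
      simp only [List.replicate_zero, List.nil_append] at hw
      exact ⟨hw.ne.1, c, hw.prep hx, by omega⟩
    | succ a =>
      cases b with
      | zero =>
        right; right
        simp only [List.replicate_zero, List.nil_append] at hw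
        exact ⟨hw.ne.2, c, (hw.symm.prep hy).symm, by omega⟩
      | succ b =>
        rcases ih p q huv a b x' y' hx hy rfl rfl with ⟨h1, h2, h3⟩ | ⟨h1, c', h2, h3⟩ | ⟨h1, c', h2, h3⟩
        · left; exact ⟨h1, h2, by omega⟩
        · right; left; exact ⟨h1, c', h2.prep hx, by omega⟩
        · right; right; exact ⟨h1, c', (h2.symm.prep hy).symm, by omega⟩

theorem condense_pos (a : Bool) (l : List Bool) : 1 ≤ (condense (a :: l)).length := by
  induction l generalizing a with
  | nil => simp [condense]
  | cons b l ih =>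
    rw [condense]; split_ifs
    · exact ih b
    · simp

theorem decomp_aux (u : Bool) (l : List Bool) : ∃ (a : ℕ) (x' : List Bool),
    u :: l = List.replicate (a+1) u ++ x' ∧ St (!u) x' ∧
    (∀ k, (blockSizesAux u k l).getD 0 0 = k + a) ∧
    ((condense (u :: l)).length = 1 ↔ x' = []) := by
  induction l with
  | nil => exact ⟨0, [], by simp [St, blockSizesAux, condense]⟩
  | cons b l ih =>
    by_cases h : b = u
    · subst h
      obtain ⟨a, x', h1, h2, h3, h4⟩ := ih
      refine ⟨a + 1, x', ?_, h2, ?_, ?_⟩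
      · rw [h1]; rfl
      · intro k
        rw [blockSizesAux, if_pos rfl, h3]; omega
      · rw [condense, if_pos rfl, h4]
    · refine ⟨0, b :: l, rfl, ?_, ?_, ?_⟩
      · right; refine ⟨l, ?_⟩; cases b <;> cases u <;> simp_all
      · intro k; rw [blockSizesAux, if_neg h]; simp
      · have := condense_pos b l
        rw [condense, if_neg (fun e => h e.symm)]
        simp
        intro e; rw [e] at this; simp at this

theorem decomp (x : List Bool) (hx : x ≠ []) : ∃ (u : Bool) (a : ℕ) (x' : List Bool),
    x = List.replicate (a+1) u ++ x' ∧ St (!u) x' ∧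
    (blockSizes x).getD 0 0 = a + 1 ∧
    ((condense x).length = 1 ↔ x' = []) := by
  cases x with
  | nil => exact absurd rfl hx
  | cons u l =>
    obtain ⟨a, x', h1, h2, h3, h4⟩ := decomp_aux u l
    exact ⟨u, a, x', h1, h2, by rw [blockSizes, h3]; omega, h4⟩

/-- recursive case distinction for `dtw(x,y)²` when the first
symbols of `x` and `y` differ, where `a = |x⁽¹⁾|` and `b = |y⁽¹⁾|`. -/
theorem dtwSq_first_symbol_differs (x y : List Bool) (hx : x ≠ []) (hy : y ≠ [])
    (hm : (condense y).length ≤ (condense x).length)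
    (hne : x.head? ≠ y.head?) :
    ((condense x).length = 1 → (condense y).length = 1 →
      dtwSq x y = max x.length y.length) ∧
    (1 < (condense x).length → (condense y).length = 1 →
      dtwSq x y = (blockSizes x).getD 0 0 +
        dtwSq (x.drop ((blockSizes x).getD 0 0)) y) ∧
    (1 < (condense y).length →
      dtwSq x y = min
        ((blockSizes x).getD 0 0 + dtwSq (x.drop ((blockSizes x).getD 0 0)) y)
        ((blockSizes y).getD 0 0 + dtwSq x (y.drop ((blockSizes y).getD 0 0)))) := by
  obtain ⟨u, a, x', ex, sx, bx, cx⟩ := decomp x hx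
  obtain ⟨v, b, y', ey, sy, bY, cy⟩ := decomp y hy
  have huv : u ≠ v := by
    rintro rfl; apply hne; rw [ex, ey]; simp [List.replicate_succ]
  have e1 : (!u) = v := by cases u <;> cases v <;> simp_all
  have e2 : (!v) = u := by cases u <;> cases v <;> simp_all
  rw [e1] at sx
  rw [e2] at sy
  have dx : x.drop (a+1) = x' := by
    rw [ex, List.drop_left' (by simp)]
  have dy : y.drop (b+1) = y' := by
    rw [ey, List.drop_left' (by simp)]
  have low := (dtw_mem hx hy).low u v huv a b x' y' sx sy ex ey
  have ux : x' ≠ [] → dtwSq x y ≤ a + 1 + dtwSq x' y := by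
    intro h
    apply dtw_le
    have := dtw_mem h hy
    generalize dtwSq x' y = c at this
    rw [ey, List.replicate_succ, List.cons_append] at this ⊢
    rw [ex]
    exact this.up huv (a+1)
  have uy : y' ≠ [] → dtwSq x y ≤ b + 1 + dtwSq x y' := by
    intro h
    apply dtw_le
    have := (dtw_mem hx h).symm
    generalize dtwSq x y' = c at this
    rw [ex, List.replicate_succ, List.cons_append] at this ⊢
    rw [ey]
    exact (this.up huv.symm (b+1)).symm
  rw [bx, bY, dx, dy]
  refine ⟨?_, ?_, ?_⟩
  · intro h1 h2
    have h1 := cx.1 h1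
    have h2 := cy.1 h2
    have lx : x.length = a + 1 := by rw [ex, h1]; simp
    have ly : y.length = b + 1 := by rw [ey, h2]; simp
    rw [lx, ly]
    apply le_antisymm
    · apply dtw_le
      have := WW.const huv a b
      rw [ex, ey, h1, h2, List.append_nil, List.append_nil]
      exact this
    · rcases low with ⟨_, _, h⟩ | ⟨h, _⟩ | ⟨h, _⟩
      · exact h
      · exact absurd h1 h
      · exact absurd h2 h
  · intro h1 h2
    have h1 : x' ≠ [] := fun h => by have := cx.2 h; omega
    have h2 := cy.1 h2
    apply le_antisymm (ux h1)
    rcases low with ⟨h, _, _⟩ | ⟨_, c', h, h'⟩ | ⟨h, _⟩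
    · exact absurd h h1
    · have := dtw_le h; omega
    · exact absurd h2 h
  · intro h2
    have h1 : x' ≠ [] := fun h => by have := cx.2 h; omega
    have h2 : y' ≠ [] := fun h => by have := cy.2 h; omega
    apply le_antisymm (le_min (ux h1) (uy h2))
    rcases low with ⟨h, _, _⟩ | ⟨_, c', h, h'⟩ | ⟨_, c', h, h'⟩
    · exact absurd h h1
    · have := dtw_le h; exact (min_le_left _ _).trans (by omega)
    · have := dtw_le h; exact (min_le_right _ _).trans (by omega)
end

section
/- For the seven input strings 0, 0, 0, 101, 101, 010, 010, the string 0 is a mean with F(0) = 6, and every condensed mean equals 0. Since the median condensation length of these inputs is μ = 3, this shows the lower bound μ − 2 on the condensation length of a mean is tight. -/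
theorem aux_visit (f : ℕ × ℕ → ℕ) (hf : ∀ a b, wpStep a b → f b ≤ f a + 1) (k : ℕ) :
    ∀ (p : List (ℕ × ℕ)) (s e : ℕ × ℕ), p.head? = some s → p.getLast? = some e →
      List.IsChain wpStep p → f s ≤ k → k ≤ f e → ∃ q ∈ p, f q = k := by
  intro p
  induction p with
  | nil => intro s e h; simp at h
  | cons a t ih =>
    intro s e hs he hc h1 h2
    simp only [List.head?_cons, Option.some.injEq] at hs
    subst hs
    by_cases hk : f a = k
    · exact ⟨a, by simp, hk⟩
    cases t with
    | nil =>
      simp only [List.getLast?_singleton, Option.some.injEq] at he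
      subst he
      omega
    | cons b t =>
      rw [List.isChain_cons_cons] at hc
      have := hf a b hc.1
      rw [List.getLast?_cons_cons] at he
      obtain ⟨q, hq, hqk⟩ := ih b e (by simp) he hc.2 (by omega) h2
      exact ⟨q, List.mem_cons_of_mem _ hq, hqk⟩

theorem aux_snoc {m n m' n' : ℕ} {p : List (ℕ × ℕ)} (h : IsWarpingPath (m+1) (n+1) p)
    (hs : wpStep (m, n) (m', n')) (hm : m ≤ m') (hn : n ≤ n') :
    IsWarpingPath (m'+1) (n'+1) (p ++ [(m', n')]) := by
  obtain ⟨h1, h2, h3, h4⟩ := h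
  refine ⟨by simp [List.head?_append, h1], by simp, ?_, ?_⟩
  · refine List.IsChain.append h3 (List.isChain_singleton _) ?_
    intro x hx y hy
    rw [h2] at hx
    simp at hx hy
    subst hx; subst hy; exact hs
  · intro q hq
    rw [List.mem_append] at hq
    rcases hq with hq | hq
    · have := h4 q hq; omega
    · simp at hq; subst hq; simp

theorem aux_exists (m n : ℕ) : ∃ p, IsWarpingPath (m+1) (n+1) p := by
  induction m with
  | zero =>
    induction n with
    | zero => exact ⟨[(0,0)], by simp, by simp, List.isChain_singleton _, by simp⟩
    | succ n ih =>
      obtain ⟨p, hp⟩ := ih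
      exact ⟨_, aux_snoc hp (m' := 0) (n' := n+1) (by simp [wpStep]) (by omega) (by omega)⟩
  | succ m ih =>
    obtain ⟨p, hp⟩ := ih
    exact ⟨_, aux_snoc hp (m' := m+1) (n' := n) (by simp [wpStep]) (by omega) (by omega)⟩

theorem aux_attained (x y : List Bool) (hx : x ≠ []) (hy : y ≠ []) :
    ∃ p, IsWarpingPath x.length y.length p ∧ pathCost x y p = dtwSq x y := by
  have hx' := List.length_pos_iff.2 hx
  have hy' := List.length_pos_iff.2 hy
  obtain ⟨p, hp⟩ := aux_exists (x.length - 1) (y.length - 1)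
  rw [Nat.sub_add_cancel hx', Nat.sub_add_cancel hy'] at hp
  exact Nat.sInf_mem (s := {c | ∃ p, IsWarpingPath x.length y.length p ∧ pathCost x y p = c})
    ⟨_, p, hp, rfl⟩

theorem aux_upper (x y : List Bool) (p : List (ℕ × ℕ))
    (hp : IsWarpingPath x.length y.length p) : dtwSq x y ≤ pathCost x y p :=
  Nat.sInf_le ⟨p, hp, rfl⟩

theorem aux_pos (x y : List Bool) (p : List (ℕ × ℕ)) (q : ℕ × ℕ) (hq : q ∈ p)
    (h : x.getD q.1 false ≠ y.getD q.2 false) : 1 ≤ pathCost x y p := by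
  unfold pathCost
  refine List.single_le_sum (by simp) 1 ?_
  exact List.mem_map.2 ⟨q, hq, by rw [if_neg h]⟩

theorem aux_ends (x y : List Bool) (hx : 2 ≤ x.length) (hy : y ≠ []) :
    (if x.getD 0 false = y.getD 0 false then 0 else 1) +
    (if x.getD (x.length - 1) false = y.getD (y.length - 1) false then 0 else 1) ≤ dtwSq x y := by
  obtain ⟨p, hp, hc⟩ := aux_attained x y (by rintro rfl; simp at hx) hy
  rw [← hc]
  obtain ⟨h1, h2, -, -⟩ := hp
  cases p with
  | nil => simp at h1
  | cons a t =>
    simp only [List.head?_cons, Option.some.injEq] at h1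
    subst h1
    rcases List.eq_nil_or_concat t with rfl | ⟨t', e, rfl⟩
    · simp at h2; omega
    · have he : e = (x.length - 1, y.length - 1) := by
        simpa [List.getLast?_cons] using h2
      subst he
      unfold pathCost
      simp only [List.map_cons, List.sum_cons, List.concat_eq_append, List.map_append, List.sum_append,
        List.map_nil, List.sum_nil]
      omega

theorem aux_row (x y : List Bool) (hx : x ≠ []) (hy : y ≠ []) (k : ℕ) (hk : k < x.length)
    (h : x.getD k false = true) (hz : ∀ j, y.getD j false = false) : 1 ≤ dtwSq x y := by
  obtain ⟨p, ⟨h1, h2, h3, -⟩, hc⟩ := aux_attained x y hx hy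
  rw [← hc]
  obtain ⟨q, hq, rfl⟩ := aux_visit Prod.fst (by intro a b h; unfold wpStep at h; omega) k p _ _ h1 h2 h3
    (by simp) (by simp; omega)
  exact aux_pos x y p q hq (by rw [h, hz]; simp)

theorem aux_col (x y : List Bool) (hx : x ≠ []) (hy : y ≠ []) (k : ℕ) (hk : k < y.length)
    (h : y.getD k false = true) (hz : ∀ j, x.getD j false = false) : 1 ≤ dtwSq x y := by
  obtain ⟨p, ⟨h1, h2, h3, -⟩, hc⟩ := aux_attained x y hx hy
  rw [← hc]
  obtain ⟨q, hq, rfl⟩ := aux_visit Prod.snd (by intro a b h; unfold wpStep at h; omega) k p _ _ h1 h2 h3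
    (by simp) (by simp; omega)
  exact aux_pos x y p q hq (by rw [h, hz]; simp)

theorem aux_one (z : List Bool) (hz : z ≠ []) (h : true ∈ z) :
    7 ≤ 3 * dtwSq [false] z + 2 * dtwSq [true, false, true] z + 2 * dtwSq [false, true, false] z := by
  obtain ⟨k, hk, hkz⟩ := List.mem_iff_getElem.1 h
  have h1 := aux_col [false] z (by simp) hz k hk (by simp [hk, hkz])
    (by intro j; cases j <;> simp)
  have h2 := aux_ends [true, false, true] z (by simp) hz
  have h3 := aux_ends [false, true, false] z (by simp) hz
  simp only [List.length_cons, List.length_nil] at h2 h3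
  generalize z.getD 0 false = u at *
  generalize z.getD (z.length - 1) false = v at *
  cases u <;> cases v <;> simp at h2 h3 <;> omega

theorem aux_zero (z : List Bool) (hz : z ≠ []) (h : true ∉ z) :
    6 ≤ 3 * dtwSq [false] z + 2 * dtwSq [true, false, true] z + 2 * dtwSq [false, true, false] z := by
  have hall : ∀ j, z.getD j false = false := by
    intro j
    by_contra hj
    rw [Bool.not_eq_false] at hj
    apply h
    by_cases hl : j < z.length
    · rw [List.getD_eq_getElem _ _ hl] at hj
      rw [← hj]; exact List.getElem_mem hl
    · rw [List.getD_eq_default _ _ (by omega)] at hj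
      simp at hj
  have h2 := aux_ends [true, false, true] z (by simp) hz
  have h3 := aux_row [false, true, false] z (by simp) hz 1 (by simp) (by simp) hall
  rw [hall, hall] at h2
  simp at h2
  omega

theorem aux_F (z : List Bool) : Fobj [[false], [false], [false], [true, false, true],
    [true, false, true], [false, true, false], [false, true, false]] z =
    3 * dtwSq [false] z + 2 * dtwSq [true, false, true] z + 2 * dtwSq [false, true, false] z := by
  simp [Fobj]; ring

theorem aux_lower (z : List Bool) (hz : z ≠ []) :
    6 ≤ 3 * dtwSq [false] z + 2 * dtwSq [true, false, true] z + 2 * dtwSq [false, true, false] z := by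
  by_cases h : true ∈ z
  · have := aux_one z hz h; omega
  · exact aux_zero z hz h

theorem aux_false : 3 * dtwSq [false] [false] + 2 * dtwSq [true, false, true] [false] +
    2 * dtwSq [false, true, false] [false] = 6 := by
  have h := aux_lower [false] (by simp)
  have h1 := aux_upper [false] [false] [(0,0)]
    ⟨by simp, by simp, List.isChain_singleton _, by simp⟩
  have h2 := aux_upper [true, false, true] [false] [(0,0),(1,0),(2,0)]
    ⟨by simp, by simp, by show List.IsChain _ _; simp [List.isChain_cons_cons, wpStep], by simp⟩
  have h3 := aux_upper [false, true, false] [false] [(0,0),(1,0),(2,0)]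
    ⟨by simp, by simp, by show List.IsChain _ _; simp [List.isChain_cons_cons, wpStep], by simp⟩
  simp [pathCost] at h1 h2 h3
  omega

/-- for the inputs `0, 0, 0, 101, 101, 010, 010` (encoded with
`0 = false`, `1 = true`), the string `0` is a mean with `F(0) = 6`, every
condensed mean equals `0`, and the median condensation length is `μ = 3`,
so the mean has condensation length exactly `μ - 2` (tightness of the lower
bound). -/
theorem mean_lower_bound_tight :
    let ss : List (List Bool) :=
      [[false], [false], [false], [true, false, true], [true, false, true],
        [false, true, false], [false, true, false]]
    IsMean ss [false] ∧ Fobj ss [false] = 6 ∧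
    (∀ z : List Bool, List.Chain' (· ≠ ·) z → IsMean ss z → z = [false]) ∧
    (ss.map fun s => (condense s).length).getD ((ss.length + 1) / 2 - 1) 0 = 3 ∧
    (condense [false]).length = 3 - 2 := by
  intro ss
  refine ⟨⟨by simp, ?_⟩, ?_, ?_, by simp [ss, condense], by simp [condense]⟩
  · intro w hw
    rw [aux_F, aux_F, aux_false]
    exact aux_lower w hw
  · rw [aux_F, aux_false]
  · intro z hc hm
    have h6 := hm.2 [false] (by simp)
    rw [aux_F, aux_F, aux_false] at h6
    have hn : true ∉ z := by
      intro h
      have := aux_one z hm.1 h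
      omega
    match z, hc, hm.1, hn with
    | [a], _, _, hn => cases a <;> simp_all
    | a :: b :: t, hc, _, hn =>
      have := (List.isChain_cons_cons.1 hc).1
      cases a <;> cases b <;> simp_all
end
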